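/- Fix j with 0 ≤ j ≤ n. Let ρ be a C^∞ everywhere positive function on X satisfying L^T ρ = 0 (a smooth stationary density), and define F(p,q,r₁,rₙ) = −R_j(p,q,r₁,rₙ) − log ρ(−p,q,r₁,rₙ) (so that ρ = J(e^{−R_j} e^{−F})). Then the entropy production is given pointwise by σ_j = γ Σ_{i∈{1,n}} T_i |∇_{r_i} F|² − L F everywhere on X. -/

import Mathlib

open scoped BigOperators

noncomputable section

/-- `Vc d` : vectors in ℝ^d. -/
abbrev Vc (d : ℕ) := Fin d → ℝ
/-- Configurations of `m` oscillators. -/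
abbrev Cfg (m d : ℕ) := Fin m → Vc d
/-- Phase space X = p × q × r₁ × rₙ (for a chain of `m` oscillators). -/
abbrev Phs (m d : ℕ) := Cfg m d × Cfg m d × Vc d × Vc d

variable {m d : ℕ}

/-- unit coordinate vector in the p-block -/
def eP (i : Fin m) (a : Fin d) : Phs m d := (Pi.single i (Pi.single a 1), 0, 0, 0)
/-- unit coordinate vector in the q-block -/
def eQ (i : Fin m) (a : Fin d) : Phs m d := (0, Pi.single i (Pi.single a 1), 0, 0)
/-- unit coordinate vector in the r₁-block -/
def eR1 (a : Fin d) : Phs m d := (0, 0, Pi.single a 1, 0)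
/-- unit coordinate vector in the rₙ-block -/
def eRn (a : Fin d) : Phs m d := (0, 0, 0, Pi.single a 1)

/-- directional (partial) derivative -/
def PD (f : Phs m d → ℝ) (x v : Phs m d) : ℝ := fderiv ℝ f x v

variable {n : ℕ}

/-- total potential V(q) = Σᵢ U⁽¹⁾(qᵢ) + Σᵢ U⁽²⁾(qᵢ − qᵢ₊₁) of a chain of n+2 oscillators -/
def Vtot (U1 U2 : Vc d → ℝ) (q : Cfg (n+2) d) : ℝ :=
  (∑ i, U1 (q i)) + ∑ i : Fin (n+1), U2 (q i.castSucc - q i.succ)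

/-- the generator L of the dynamics of the chain coupled to two reservoirs -/
def gen (γ lam T1 Tn : ℝ) (U1 U2 : Vc d → ℝ) (f : Phs (n+2) d → ℝ) (x : Phs (n+2) d) : ℝ :=
  (γ * (T1 * ∑ a, PD (fun y => PD f y (eR1 a)) x (eR1 a)
        - ∑ a, x.2.2.1 a * PD f x (eR1 a))
    + lam * ((∑ a, x.1 0 a * PD f x (eR1 a)) - ∑ a, x.2.2.1 a * PD f x (eP 0 a)))
  + (γ * (Tn * ∑ a, PD (fun y => PD f y (eRn a)) x (eRn a)
        - ∑ a, x.2.2.2 a * PD f x (eRn a))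
    + lam * ((∑ a, x.1 (Fin.last (n+1)) a * PD f x (eRn a))
        - ∑ a, x.2.2.2 a * PD f x (eP (Fin.last (n+1)) a)))
  + ∑ i, ((∑ a, x.1 i a * PD f x (eQ i a))
        - ∑ a, fderiv ℝ (Vtot U1 U2) x.2.1 (Pi.single i (Pi.single a 1)) * PD f x (eP i a))

/-- the formal adjoint Lᵀ of L with respect to Lebesgue measure -/
def genT (γ lam T1 Tn : ℝ) (U1 U2 : Vc d → ℝ) (g : Phs (n+2) d → ℝ) (x : Phs (n+2) d) : ℝ :=
  (γ * (T1 * ∑ a, PD (fun y => PD g y (eR1 a)) x (eR1 a)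
        + ∑ a, PD (fun y => y.2.2.1 a * g y) x (eR1 a))
    - lam * ((∑ a, x.1 0 a * PD g x (eR1 a)) - ∑ a, x.2.2.1 a * PD g x (eP 0 a)))
  + (γ * (Tn * ∑ a, PD (fun y => PD g y (eRn a)) x (eRn a)
        + ∑ a, PD (fun y => y.2.2.2 a * g y) x (eRn a))
    - lam * ((∑ a, x.1 (Fin.last (n+1)) a * PD g x (eRn a))
        - ∑ a, x.2.2.2 a * PD g x (eP (Fin.last (n+1)) a)))
  - ∑ i, ((∑ a, x.1 i a * PD g x (eQ i a))
        - ∑ a, fderiv ℝ (Vtot U1 U2) x.2.1 (Pi.single i (Pi.single a 1)) * PD g x (eP i a))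

/-- time reversal (Jf)(p,q,r₁,rₙ) = f(−p,q,r₁,rₙ) -/
def Jop (f : Phs m d → ℝ) : Phs m d → ℝ := fun x => f (-x.1, x.2.1, x.2.2.1, x.2.2.2)

/-- nat-indexed access to the oscillator coordinates (junk value outside the range) -/
def cfgNat (q : Cfg (n+2) d) (k : ℕ) : Vc d := if h : k < n + 2 then q ⟨k, h⟩ else 0

/-- local energies H_k, 0-indexed: k ∈ {0, …, n+1} -/
def Hloc (U1 U2 : Vc d → ℝ) (k : ℕ) (x : Phs (n+2) d) : ℝ :=
  (∑ a, (cfgNat x.1 k a) ^ 2) / 2 + U1 (cfgNat x.2.1 k)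
  + (if k = 0 then 0 else (1/2) * U2 (cfgNat x.2.1 (k-1) - cfgNat x.2.1 k))
  + (if k = n + 1 then 0 else (1/2) * U2 (cfgNat x.2.1 k - cfgNat x.2.1 (k+1)))

/-- heat flows Φ_j, j ∈ {0, …, n+2}: Φ_0 = −λr₁·p_0 is the flow from the left
reservoir into the chain, Φ_{n+2} = λrₙ·p_{n+1} the flow into the right reservoir,
and for 1 ≤ j ≤ n+1, Φ_j is the flow from the (0-indexed) oscillator j−1 to the
oscillator j. -/
def heatFlow (lam : ℝ) (U2 : Vc d → ℝ) (j : ℕ) (x : Phs (n+2) d) : ℝ :=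
  if j = 0 then - lam * ∑ a, x.2.2.1 a * x.1 0 a
  else if j = n + 2 then lam * ∑ a, x.2.2.2 a * x.1 (Fin.last (n+1)) a
  else ∑ a, ((cfgNat x.1 (j-1) a + cfgNat x.1 j a) / 2)
        * fderiv ℝ U2 (cfgNat x.2.1 (j-1) - cfgNat x.2.1 j) (Pi.single a 1)

/-- entropy production σ_j = (1/Tₙ − 1/T₁) Φ_j -/
def sigmaEP (lam T1 Tn : ℝ) (U2 : Vc d → ℝ) (j : ℕ) (x : Phs (n+2) d) : ℝ :=
  (1 / Tn - 1 / T1) * heatFlow lam U2 j x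

/-- two-temperatures Gibbs exponent R_j, j ∈ {0, …, n+2}: the first j oscillators
are weighted with 1/T₁, the remaining ones with 1/Tₙ. -/
def Rj (T1 Tn : ℝ) (U1 U2 : Vc d → ℝ) (j : ℕ) (x : Phs (n+2) d) : ℝ :=
  (1 / T1) * ((∑ a, (x.2.2.1 a) ^ 2) / 2 + ∑ k ∈ Finset.range j, Hloc U1 U2 k x)
  + (1 / Tn) * ((∑ k ∈ Finset.Ico j (n+2), Hloc U1 U2 k x) + (∑ a, (x.2.2.2 a) ^ 2) / 2)

/-! Write `J` for time reversal, `Lᵀ` for the adjoint of `L`, and split `L` into the thermostats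
`T Δ_r - r · ∇_r` at the two ends and a conservative vector field. Since `∇_r R_j = r / T`, the
weight `e^{-R_j}` conjugates the adjoint of each thermostat into the thermostat itself, while `J`
reverses the conservative field, which is divergence free; hence
`J Lᵀ J e^{-R_j} = e^{-R_j} (L - σ)`, where `σ` is the derivative of `R_j` along the conservative
field. Along that field `H_k` grows at rate `Φ_{k-1} - Φ_k` and `|r₁|²/2`, `|rₙ|²/2` at rates
`-Φ_0`, `Φ_n`, so telescoping over the two groups of oscillators leaves
`σ = (1/Tₙ - 1/T₁) Φ_j = σ_j`. Applying the conjugation to `e^{-F}`, for which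
`e^F L e^{-F} = γ ∑ T |∇_r F|² - L F`, gives the formula, because
`Lᵀ ρ = 0` for `ρ = J (e^{-R_j} e^{-F})`. -/

section DirectionalDerivatives

variable {E : Type*} [NormedAddCommGroup E] [NormedSpace ℝ E]

theorem hasFDerivAt_sum_sq_div_two {ι : Type*} [Fintype ι] (r : ι → E →L[ℝ] ℝ) (x : E) :
    HasFDerivAt (fun y => (∑ a, r a y ^ 2) / 2) (∑ a, r a x • r a) x := by
  have hsum := (HasFDerivAt.fun_sum fun a (_ : a ∈ Finset.univ) =>
    (r a).hasFDerivAt (x := x) |>.pow 2).mul_const (2⁻¹ : ℝ)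
  simp only [← div_eq_mul_inv] at hsum
  refine hsum.congr_fderiv ?_
  simp [Finset.smul_sum, smul_smul]

theorem clm_apply_eq_sum_mul_single {ι : Type*} [Fintype ι] [DecidableEq ι] (ℓ : (ι → ℝ) →L[ℝ] ℝ)
    (w : ι → ℝ) : ℓ w = ∑ a, w a * ℓ (Pi.single a 1) := by
  conv_lhs => rw [pi_eq_sum_univ' w]
  simp

theorem fderiv_clm_mul_apply (ℓ : E →L[ℝ] ℝ) {f : E → ℝ} {x : E} (hf : DifferentiableAt ℝ f x)
    (v : E) : fderiv ℝ (fun y => ℓ y * f y) x v = ℓ x * fderiv ℝ f x v + ℓ v * f x := by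
  rw [fderiv_fun_mul ℓ.differentiableAt hf, ℓ.fderiv]
  simp [mul_comm]

theorem fderiv_exp_neg_apply {f : E → ℝ} {x : E} (hf : DifferentiableAt ℝ f x) (v : E) :
    fderiv ℝ (fun y => Real.exp (-f y)) x v = Real.exp (-f x) * -fderiv ℝ f x v := by
  rw [fderiv_exp hf.fun_neg, fderiv_fun_neg]
  rfl

theorem fderiv_exp_neg_mul_apply {R u : E → ℝ} {x : E} (hR : DifferentiableAt ℝ R x)
    (hu : DifferentiableAt ℝ u x) (v : E) :
    fderiv ℝ (fun y => Real.exp (-R y) * u y) x v =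
      Real.exp (-R x) * (fderiv ℝ u x v - fderiv ℝ R x v * u x) := by
  rw [fderiv_fun_mul hR.fun_neg.exp hu]
  simp only [add_apply, smul_apply, smul_eq_mul, fderiv_exp_neg_apply hR]
  ring

/-- `f` is differentiable and so are its partial derivatives along the directions `e a`: the
regularity under which `laplacianAlong e f` is meaningful. -/
def DifferentiableTwiceAlong {ι : Type*} (e : ι → E) (f : E → ℝ) : Prop :=
  Differentiable ℝ f ∧ ∀ a, Differentiable ℝ fun y => fderiv ℝ f y (e a)

namespace DifferentiableTwiceAlong

variable {ι : Type*} {e : ι → E} {f g : E → ℝ}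

theorem of_contDiff (hf : ContDiff ℝ 2 f) : DifferentiableTwiceAlong e f :=
  ⟨hf.differentiable two_ne_zero, fun _ =>
    ((hf.fderiv_right (m := 1) le_rfl).differentiable one_ne_zero).clm_apply
      (differentiable_const _)⟩

theorem neg_sub (hf : DifferentiableTwiceAlong e f) (hg : DifferentiableTwiceAlong e g) :
    DifferentiableTwiceAlong e fun y => -f y - g y := by
  refine ⟨hf.1.fun_neg.fun_sub hg.1, fun a => ?_⟩
  have hD (y : E) : fderiv ℝ (fun y => -f y - g y) y (e a) =
      -fderiv ℝ f y (e a) - fderiv ℝ g y (e a) := by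
    rw [fderiv_fun_sub (hf.1 y).fun_neg (hg.1 y), fderiv_fun_neg]
    rfl
  simpa only [hD] using (hf.2 a).fun_neg.fun_sub (hg.2 a)

theorem exp_neg (hf : DifferentiableTwiceAlong e f) :
    DifferentiableTwiceAlong e fun y => Real.exp (-f y) := by
  refine ⟨hf.1.fun_neg.exp, fun a => ?_⟩
  simpa only [fderiv_exp_neg_apply (hf.1 _)] using
    hf.1.fun_neg.exp.fun_mul (hf.2 a).fun_neg

end DifferentiableTwiceAlong

end DirectionalDerivatives

section Thermostat

variable {E ι : Type*} [NormedAddCommGroup E] [NormedSpace ℝ E] [Fintype ι]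

/-- The Laplacian in the directions `e a`, written `Δ_r` when the `e a` are the unit vectors of
a reservoir variable `r`. -/
def laplacianAlong (e : ι → E) (f : E → ℝ) (x : E) : ℝ :=
  ∑ a, fderiv ℝ (fun y => fderiv ℝ f y (e a)) x (e a)

/-- The Ornstein–Uhlenbeck operator `T Δ_r - r · ∇_r` of a reservoir variable with coordinates
`r a` and coordinate directions `e a`. -/
def thermostat (T : ℝ) (e : ι → E) (r : ι → E →L[ℝ] ℝ) (f : E → ℝ) (x : E) : ℝ :=
  T * laplacianAlong e f x - ∑ a, r a x * fderiv ℝ f x (e a)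

/-- The formal Lebesgue adjoint `T Δ_r + div_r (r ·)` of `thermostat`. -/
def thermostatAdjoint (T : ℝ) (e : ι → E) (r : ι → E →L[ℝ] ℝ) (g : E → ℝ) (x : E) : ℝ :=
  T * laplacianAlong e g x + ∑ a, fderiv ℝ (fun y => r a y * g y) x (e a)

variable {T : ℝ} {e : ι → E} {r : ι → E →L[ℝ] ℝ}

theorem laplacianAlong_exp_neg {f : E → ℝ} (hf : DifferentiableTwiceAlong e f) (x : E) :
    laplacianAlong e (fun y => Real.exp (-f y)) x =
      Real.exp (-f x) * (∑ a, fderiv ℝ f x (e a) ^ 2 - laplacianAlong e f x) := by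
  simp only [laplacianAlong, ← Finset.sum_sub_distrib, Finset.mul_sum]
  refine Finset.sum_congr rfl fun a _ => ?_
  simp only [fderiv_exp_neg_apply (hf.1 _)]
  rw [fderiv_exp_neg_mul_apply (hf.1 x) (hf.2 a x).fun_neg, fderiv_fun_neg, neg_apply]
  ring

theorem thermostat_exp_neg {f : E → ℝ} (hf : DifferentiableTwiceAlong e f) (x : E) :
    thermostat T e r (fun y => Real.exp (-f y)) x =
      Real.exp (-f x) * (T * ∑ a, fderiv ℝ f x (e a) ^ 2 - thermostat T e r f x) := by
  have hdrift : ∑ a, r a x * (Real.exp (-f x) * -fderiv ℝ f x (e a)) =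
      -(Real.exp (-f x) * ∑ a, r a x * fderiv ℝ f x (e a)) := by
    rw [Finset.mul_sum, ← Finset.sum_neg_distrib]
    exact Finset.sum_congr rfl fun a _ => by ring
  simp only [thermostat, laplacianAlong_exp_neg hf, fderiv_exp_neg_apply (hf.1 x), hdrift]
  ring

theorem thermostatAdjoint_exp_neg_mul (hT : T ≠ 0) (hr : ∀ a, r a (e a) = 1) {R u : E → ℝ}
    (hR : Differentiable ℝ R) (hRe : ∀ y a, fderiv ℝ R y (e a) = r a y / T)
    (hu : DifferentiableTwiceAlong e u) (x : E) :
    thermostatAdjoint T e r (fun y => Real.exp (-R y) * u y) x =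
      Real.exp (-R x) * thermostat T e r u x := by
  simp only [thermostatAdjoint, thermostat, laplacianAlong, Finset.mul_sum, mul_sub,
    ← Finset.sum_add_distrib, ← Finset.sum_sub_distrib]
  refine Finset.sum_congr rfl fun a _ => ?_
  have hD (y : E) : fderiv ℝ (fun y => Real.exp (-R y) * u y) y (e a) =
      Real.exp (-R y) * (fderiv ℝ u y (e a) - (T⁻¹ • r a) y * u y) := by
    rw [fderiv_exp_neg_mul_apply (hR y) (hu.1 y), hRe, div_eq_inv_mul]
    rfl
  have hru : Differentiable ℝ fun y => (T⁻¹ • r a) y * u y :=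
    (T⁻¹ • r a).differentiable.fun_mul hu.1
  rw [fderiv_clm_mul_apply (r a) ((hR x).fun_neg.exp.fun_mul (hu.1 x)), hr a]
  simp only [hD]
  rw [fderiv_exp_neg_mul_apply (hR x) ((hu.2 a x).fun_sub (hru x)), hRe,
    fderiv_fun_sub (hu.2 a x) (hru x), sub_apply, fderiv_clm_mul_apply _ (hu.1 x)]
  simp only [smul_apply, smul_eq_mul, hr a]
  field_simp
  ring

theorem laplacianAlong_comp_equiv (A : E ≃L[ℝ] E) (he : ∀ a, A (e a) = e a) (f : E → ℝ) (x : E) :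
    laplacianAlong e (f ∘ A) x = laplacianAlong e f (A x) := by
  have hD (g : E → ℝ) (a : ι) (y : E) :
      fderiv ℝ (g ∘ A) y (e a) = fderiv ℝ g (A y) (e a) := by
    rw [A.comp_right_fderiv, ContinuousLinearMap.comp_apply, ContinuousLinearEquiv.coe_coe, he]
  simp only [laplacianAlong, hD]
  exact Finset.sum_congr rfl fun a _ => hD (fun y => fderiv ℝ f y (e a)) a x

theorem thermostatAdjoint_comp_equiv (A : E ≃L[ℝ] E) (he : ∀ a, A (e a) = e a)
    (hr : ∀ a y, r a (A y) = r a y) (f : E → ℝ) (x : E) :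
    thermostatAdjoint T e r (f ∘ A) x = thermostatAdjoint T e r f (A x) := by
  have hdiv (a : ι) : fderiv ℝ (fun y => r a y * (f ∘ A) y) x (e a) =
      fderiv ℝ (fun y => r a y * f y) (A x) (e a) := by
    rw [show (fun y => r a y * (f ∘ A) y) = (fun y => r a y * f y) ∘ A by ext; simp [hr],
      A.comp_right_fderiv, ContinuousLinearMap.comp_apply, ContinuousLinearEquiv.coe_coe, he]
  simp only [thermostatAdjoint, laplacianAlong_comp_equiv A he, hdiv]

end Thermostat

section Dynamics

/-- Time reversal `(p, q, r₁, rₙ) ↦ (-p, q, r₁, rₙ)` on phase space. -/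
def timeReversal : Phs m d ≃L[ℝ] Phs m d :=
  (ContinuousLinearEquiv.neg ℝ).prodCongr (.refl ℝ _)

theorem timeReversal_apply (x : Phs m d) :
    timeReversal x = (-x.1, x.2.1, x.2.2.1, x.2.2.2) := rfl

theorem timeReversal_timeReversal (x : Phs m d) : timeReversal (timeReversal x) = x := by
  simp [timeReversal_apply]

theorem Jop_eq_comp_timeReversal (f : Phs m d → ℝ) : Jop f = f ∘ timeReversal := rfl

/-- The coordinates of `r₁`. -/
def leftCoord (a : Fin d) : Phs m d →L[ℝ] ℝ :=
  .proj a ∘L .fst ℝ _ _ ∘L .snd ℝ _ _ ∘L .snd ℝ _ _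

/-- The coordinates of `rₙ`. -/
def rightCoord (a : Fin d) : Phs m d →L[ℝ] ℝ :=
  .proj a ∘L .snd ℝ _ _ ∘L .snd ℝ _ _ ∘L .snd ℝ _ _

/-- The conservative part of the dynamics as a vector field: Hamilton's equations for the chain
together with the energy preserving exchange with the reservoirs. It is the first-order part of
`gen` that remains when the thermostats are removed. -/
def conservativeField (lam : ℝ) (U1 U2 : Vc d → ℝ) (x : Phs (n + 2) d) : Phs (n + 2) d :=
  (Pi.single 0 (-lam • x.2.2.1) + Pi.single (Fin.last (n + 1)) (-lam • x.2.2.2)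
      - fun i a => fderiv ℝ (Vtot U1 U2) x.2.1 (Pi.single i (Pi.single a 1)),
    x.1, lam • x.1 0, lam • x.1 (Fin.last (n + 1)))

theorem conservativeField_timeReversal (lam : ℝ) (U1 U2 : Vc d → ℝ) (x : Phs (n + 2) d) :
    conservativeField lam U1 U2 (timeReversal x) =
      -timeReversal (conservativeField lam U1 U2 x) := by
  simp [timeReversal_apply, conservativeField]

theorem sum_smul_unit_vectors (v : Phs m d) :
    ∑ i, ∑ a, v.1 i a • eP i a + ∑ i, ∑ a, v.2.1 i a • eQ i a + ∑ a, v.2.2.1 a • eR1 a +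
      ∑ a, v.2.2.2 a • eRn a = v := by
  refine Prod.ext ?_ (Prod.ext ?_ (Prod.ext ?_ ?_)) <;> ext <;>
    simp [eP, eQ, eR1, eRn, Prod.fst_sum, Prod.snd_sum, Finset.sum_apply, Pi.single_apply,
      apply_ite]

theorem clm_apply_conservativeField (lam : ℝ) (U1 U2 : Vc d → ℝ) (x : Phs (n + 2) d)
    (ℓ : Phs (n + 2) d →L[ℝ] ℝ) :
    ℓ (conservativeField lam U1 U2 x) =
      lam * (∑ a, x.1 0 a * ℓ (eR1 a) - ∑ a, x.2.2.1 a * ℓ (eP 0 a)) +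
      lam * (∑ a, x.1 (Fin.last (n + 1)) a * ℓ (eRn a) -
        ∑ a, x.2.2.2 a * ℓ (eP (Fin.last (n + 1)) a)) +
      ∑ i, (∑ a, x.1 i a * ℓ (eQ i a) -
        ∑ a, fderiv ℝ (Vtot U1 U2) x.2.1 (Pi.single i (Pi.single a 1)) * ℓ (eP i a)) := by
  have hsingle (i : Fin (n + 2)) (w : Vc d) :
      ∑ k, ∑ a, (Pi.single i w : Cfg (n + 2) d) k a * ℓ (eP k a) = ∑ a, w a * ℓ (eP i a) := by
    rw [Fintype.sum_eq_single i fun k hk => by simp [Pi.single_eq_of_ne hk], Pi.single_eq_same]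
  conv_lhs => rw [← sum_smul_unit_vectors (conservativeField lam U1 U2 x)]
  simp only [map_add, map_sum, map_smul, smul_eq_mul, conservativeField, Pi.add_apply,
    Pi.sub_apply, add_mul, sub_mul, Finset.sum_add_distrib, Finset.sum_sub_distrib, hsingle]
  simp only [Pi.smul_apply, smul_eq_mul, mul_assoc, ← Finset.mul_sum]
  ring

theorem gen_eq_thermostat_add (γ lam T1 Tn : ℝ) (U1 U2 : Vc d → ℝ) (f : Phs (n + 2) d → ℝ)
    (x : Phs (n + 2) d) :
    gen γ lam T1 Tn U1 U2 f x =
      γ * (thermostat T1 eR1 leftCoord f x + thermostat Tn eRn rightCoord f x) +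
        fderiv ℝ f x (conservativeField lam U1 U2 x) := by
  simp only [gen, PD, clm_apply_conservativeField, thermostat, laplacianAlong, leftCoord,
    rightCoord, ContinuousLinearMap.comp_apply, ContinuousLinearMap.proj_apply,
    ContinuousLinearMap.coe_fst', ContinuousLinearMap.coe_snd']
  ring

theorem genT_eq_thermostatAdjoint_sub (γ lam T1 Tn : ℝ) (U1 U2 : Vc d → ℝ)
    (g : Phs (n + 2) d → ℝ) (x : Phs (n + 2) d) :
    genT γ lam T1 Tn U1 U2 g x =
      γ * (thermostatAdjoint T1 eR1 leftCoord g x + thermostatAdjoint Tn eRn rightCoord g x) -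
        fderiv ℝ g x (conservativeField lam U1 U2 x) := by
  simp only [genT, PD, clm_apply_conservativeField, thermostatAdjoint, laplacianAlong, leftCoord,
    rightCoord, ContinuousLinearMap.comp_apply, ContinuousLinearMap.proj_apply,
    ContinuousLinearMap.coe_fst', ContinuousLinearMap.coe_snd']
  ring

theorem genT_Jop_timeReversal (γ lam T1 Tn : ℝ) (U1 U2 : Vc d → ℝ) (f : Phs (n + 2) d → ℝ)
    (x : Phs (n + 2) d) :
    genT γ lam T1 Tn U1 U2 (Jop f) (timeReversal x) =
      γ * (thermostatAdjoint T1 eR1 leftCoord f x + thermostatAdjoint Tn eRn rightCoord f x) +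
        fderiv ℝ f x (conservativeField lam U1 U2 x) := by
  rw [genT_eq_thermostatAdjoint_sub, Jop_eq_comp_timeReversal,
    thermostatAdjoint_comp_equiv timeReversal (by simp [timeReversal_apply, eR1])
      fun _ _ => rfl,
    thermostatAdjoint_comp_equiv timeReversal (by simp [timeReversal_apply, eRn])
      fun _ _ => rfl,
    timeReversal.comp_right_fderiv, timeReversal_timeReversal, conservativeField_timeReversal,
    map_neg, sub_neg_eq_add, ContinuousLinearMap.comp_apply, ContinuousLinearEquiv.coe_coe,
    timeReversal_timeReversal]

theorem gen_exp_neg (γ lam T1 Tn : ℝ) (U1 U2 : Vc d → ℝ) {F : Phs (n + 2) d → ℝ}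
    (hF1 : DifferentiableTwiceAlong eR1 F) (hFn : DifferentiableTwiceAlong eRn F)
    (x : Phs (n + 2) d) :
    gen γ lam T1 Tn U1 U2 (fun y => Real.exp (-F y)) x =
      Real.exp (-F x) *
        (γ * (T1 * ∑ a, PD F x (eR1 a) ^ 2 + Tn * ∑ a, PD F x (eRn a) ^ 2) -
          gen γ lam T1 Tn U1 U2 F x) := by
  simp only [gen_eq_thermostat_add, thermostat_exp_neg hF1,
    thermostat_exp_neg hFn, fderiv_exp_neg_apply (hF1.1 x), PD]
  ring

theorem genT_Jop_exp_neg_mul (γ lam : ℝ) {T1 Tn : ℝ} (hT1 : T1 ≠ 0) (hTn : Tn ≠ 0)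
    (U1 U2 : Vc d → ℝ) {R u : Phs (n + 2) d → ℝ} (hR : Differentiable ℝ R)
    (hR1 : ∀ y a, fderiv ℝ R y (eR1 a) = y.2.2.1 a / T1)
    (hRn : ∀ y a, fderiv ℝ R y (eRn a) = y.2.2.2 a / Tn)
    (hu1 : DifferentiableTwiceAlong eR1 u) (hun : DifferentiableTwiceAlong eRn u)
    (x : Phs (n + 2) d) :
    genT γ lam T1 Tn U1 U2 (Jop fun y => Real.exp (-R y) * u y) (timeReversal x) =
      Real.exp (-R x) * (gen γ lam T1 Tn U1 U2 u x -
        fderiv ℝ R x (conservativeField lam U1 U2 x) * u x) := by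
  rw [genT_Jop_timeReversal, gen_eq_thermostat_add,
    thermostatAdjoint_exp_neg_mul hT1 (by simp [eR1, leftCoord]) hR hR1 hu1,
    thermostatAdjoint_exp_neg_mul hTn (by simp [eRn, rightCoord]) hR hRn hun,
    fderiv_exp_neg_mul_apply (hR x) (hu1.1 x)]
  ring

end Dynamics

section LocalEnergies

variable {U1 U2 : Vc d → ℝ}

/-- The position (or momentum) of the `k`-th oscillator as a linear map, `cfgNat` in bundled
form. -/
def oscillator (k : ℕ) : Cfg (n + 2) d →L[ℝ] Vc d :=
  if h : k < n + 2 then .proj ⟨k, h⟩ else 0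

theorem oscillator_apply (k : ℕ) (q : Cfg (n + 2) d) : oscillator k q = cfgNat q k := by
  unfold oscillator cfgNat
  split_ifs <;> rfl

theorem cfgNat_val (q : Cfg (n + 2) d) (i : Fin (n + 2)) : cfgNat q i = q i := by
  simp [cfgNat]

/-- The energy of the bond between the oscillators `k - 1` and `k` (0-indexed). There are no
bonds at the two ends `k = 0` and `k = n + 2` of the chain, so the truncated `0 - 1` is never
read. -/
def bondEnergy (U2 : Vc d → ℝ) (k : ℕ) (q : Cfg (n + 2) d) : ℝ :=
  if k = 0 ∨ k = n + 2 then 0 else U2 (cfgNat q (k - 1) - cfgNat q k)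

/-- The derivative `w ↦ w · ∇U⁽²⁾` of the bond potential at the elongation of the bond between
the oscillators `k - 1` and `k`, with the same boundary convention as `bondEnergy`. -/
def bondTension (U2 : Vc d → ℝ) (k : ℕ) (q : Cfg (n + 2) d) : Vc d →L[ℝ] ℝ :=
  if k = 0 ∨ k = n + 2 then 0 else fderiv ℝ U2 (cfgNat q (k - 1) - cfgNat q k)

theorem hasFDerivAt_bondEnergy (hU2 : Differentiable ℝ U2) (k : ℕ) (q : Cfg (n + 2) d) :
    HasFDerivAt (bondEnergy U2 k)
      (bondTension U2 k q ∘L (oscillator (k - 1) - oscillator k)) q := by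
  unfold bondEnergy bondTension
  split_ifs
  · exact hasFDerivAt_const 0 q
  · simp only [← oscillator_apply]
    exact (hU2 _).hasFDerivAt.comp q (oscillator (k - 1) - oscillator k).hasFDerivAt

theorem bondTension_zero (q : Cfg (n + 2) d) : bondTension U2 0 q = 0 := by
  simp [bondTension]

theorem bondTension_last (q : Cfg (n + 2) d) : bondTension U2 (n + 2) q = 0 := by
  simp [bondTension]

theorem Vtot_eq_sum_bondEnergy (q : Cfg (n + 2) d) :
    Vtot U1 U2 q = ∑ i, U1 (q i) + ∑ i : Fin (n + 1), bondEnergy U2 (i + 1) q := by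
  have hbond (i : Fin (n + 1)) : bondEnergy U2 (i + 1) q = U2 (q i.castSucc - q i.succ) := by
    rw [bondEnergy, if_neg (by omega), ← cfgNat_val q i.castSucc, ← cfgNat_val q i.succ]
    rfl
  simp only [Vtot, hbond]

theorem fderiv_Vtot_single (hU1 : Differentiable ℝ U1) (hU2 : Differentiable ℝ U2)
    (q : Cfg (n + 2) d) (i : Fin (n + 2)) (u : Vc d) :
    fderiv ℝ (Vtot U1 U2) q (Pi.single i u) =
      fderiv ℝ U1 (q i) u + bondTension U2 (i + 1) q u - bondTension U2 i q u := by
  have hV : HasFDerivAt (Vtot U1 U2) (∑ k, fderiv ℝ U1 (q k) ∘L .proj k +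
      ∑ k : Fin (n + 1), bondTension U2 (k + 1) q ∘L (oscillator k - oscillator (k + 1))) q := by
    rw [funext Vtot_eq_sum_bondEnergy]
    exact .fun_add (.fun_sum fun k _ => (hU1 _).hasFDerivAt.comp q
      (hasFDerivAt_apply k q))
      (.fun_sum fun k _ => hasFDerivAt_bondEnergy hU2 (k + 1) q)
  have hsingle (ℓ : Fin (n + 2) → Vc d →L[ℝ] ℝ) :
      ∑ k, ℓ k ((Pi.single i u : Cfg (n + 2) d) k) = ℓ i u := by
    rw [Fintype.sum_eq_single i fun k hk => by simp [Pi.single_eq_of_ne hk], Pi.single_eq_same]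
  have hleft : ∑ k : Fin (n + 1), bondTension U2 (k + 1) q (cfgNat (Pi.single i u) k) =
      bondTension U2 (i + 1) q u := by
    rw [← hsingle fun k => bondTension U2 (k + 1) q, Fin.sum_univ_castSucc (n := n + 1)]
    simp [← cfgNat_val, bondTension_last]
  have hright : ∑ k : Fin (n + 1), bondTension U2 (k + 1) q (cfgNat (Pi.single i u) (k + 1)) =
      bondTension U2 i q u := by
    rw [← hsingle fun k => bondTension U2 k q, Fin.sum_univ_succ (n := n + 1)]
    simp [← cfgNat_val, bondTension_zero]
  rw [hV.fderiv]
  simp only [add_apply, sum_apply, sub_apply, Finset.sum_sub_distrib, map_sub,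
    ContinuousLinearMap.comp_apply, ContinuousLinearMap.proj_apply, oscillator_apply,
    hsingle fun k => fderiv ℝ U1 (q k), hleft, hright]
  ring

theorem Hloc_eq_bondEnergy {k : ℕ} (hk : k < n + 2) (x : Phs (n + 2) d) :
    Hloc U1 U2 k x = (∑ a, cfgNat x.1 k a ^ 2) / 2 + U1 (cfgNat x.2.1 k) +
      1 / 2 * bondEnergy U2 k x.2.1 + 1 / 2 * bondEnergy U2 (k + 1) x.2.1 := by
  simp [Hloc, bondEnergy, hk.ne]

theorem hasFDerivAt_Hloc (hU1 : Differentiable ℝ U1) (hU2 : Differentiable ℝ U2) {k : ℕ}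
    (hk : k < n + 2) (x : Phs (n + 2) d) :
    HasFDerivAt (Hloc U1 U2 k)
      (∑ a, cfgNat x.1 k a • (.proj a ∘L oscillator k ∘L .fst ℝ _ _) +
        (fderiv ℝ U1 (cfgNat x.2.1 k) ∘L oscillator k +
          (1 / 2 : ℝ) • (bondTension U2 k x.2.1 ∘L (oscillator (k - 1) - oscillator k)) +
          (1 / 2 : ℝ) • (bondTension U2 (k + 1) x.2.1 ∘L (oscillator k - oscillator (k + 1)))) ∘L
        (.fst ℝ _ _ ∘L .snd ℝ _ _)) x := by
  have hkinetic : HasFDerivAt (fun y : Phs (n + 2) d => (∑ a, cfgNat y.1 k a ^ 2) / 2)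
      (∑ a, cfgNat x.1 k a • (.proj a ∘L oscillator k ∘L .fst ℝ _ _)) x := by
    simpa only [ContinuousLinearMap.comp_apply, ContinuousLinearMap.proj_apply,
      ContinuousLinearMap.coe_fst', oscillator_apply] using hasFDerivAt_sum_sq_div_two
        (fun a => .proj a ∘L oscillator k ∘L .fst ℝ (Cfg (n + 2) d) (Cfg (n + 2) d × Vc d × Vc d)) x
  have hsite : HasFDerivAt (fun q : Cfg (n + 2) d => U1 (cfgNat q k))
      (fderiv ℝ U1 (cfgNat x.2.1 k) ∘L oscillator k) x.2.1 := by
    simp only [← oscillator_apply]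
    exact (hU1 _).hasFDerivAt.comp x.2.1 (oscillator k).hasFDerivAt
  have hpotential := (hsite.fun_add
    ((hasFDerivAt_bondEnergy hU2 k x.2.1).const_mul (1 / 2 : ℝ))).fun_add
    ((hasFDerivAt_bondEnergy hU2 (k + 1) x.2.1).const_mul (1 / 2 : ℝ))
  rw [funext (Hloc_eq_bondEnergy hk)]
  simpa only [Function.comp_def, add_assoc, add_tsub_cancel_right] using
    hkinetic.fun_add (hpotential.comp x (hasFDerivAt_fst.comp x hasFDerivAt_snd))

theorem heatFlow_eq_add_bondTension (lam : ℝ) (k : ℕ) (x : Phs (n + 2) d) :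
    heatFlow lam U2 k x =
      (if k = 0 then -lam * ∑ a, x.2.2.1 a * x.1 0 a else 0) +
      (if k = n + 2 then lam * ∑ a, x.2.2.2 a * x.1 (Fin.last (n + 1)) a else 0) +
      1 / 2 * bondTension U2 k x.2.1 (cfgNat x.1 (k - 1) + cfgNat x.1 k) := by
  rcases eq_or_ne k 0 with rfl | h0
  · simp [heatFlow, bondTension_zero]
  rcases eq_or_ne k (n + 2) with rfl | hn
  · simp [heatFlow, bondTension_last]
  simp only [heatFlow, bondTension, h0, hn, or_self, if_false, zero_add]
  rw [clm_apply_eq_sum_mul_single, Finset.mul_sum]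
  refine Finset.sum_congr rfl fun a _ => ?_
  rw [Pi.add_apply]
  ring

theorem sum_mul_fderiv_Vtot_single (q : Cfg (n + 2) d) (i : Fin (n + 2)) (w : Vc d) :
    ∑ a, w a * fderiv ℝ (Vtot U1 U2) q (Pi.single i (Pi.single a 1)) =
      fderiv ℝ (Vtot U1 U2) q (Pi.single i w) :=
  (clm_apply_eq_sum_mul_single (fderiv ℝ (Vtot U1 U2) q ∘L .single ℝ (fun _ => Vc d) i) w).symm

theorem sum_momentum_mul_conservativeField (lam : ℝ) (x : Phs (n + 2) d) (i : Fin (n + 2)) :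
    ∑ a, x.1 i a * (conservativeField lam U1 U2 x).1 i a =
      (if i = 0 then -lam * ∑ a, x.2.2.1 a * x.1 0 a else 0) -
      (if i = Fin.last (n + 1) then lam * ∑ a, x.2.2.2 a * x.1 (Fin.last (n + 1)) a else 0) -
      fderiv ℝ (Vtot U1 U2) x.2.1 (Pi.single i (x.1 i)) := by
  have hreservoir (k : Fin (n + 2)) (r : Vc d) :
      ∑ a, x.1 i a * (Pi.single k (-lam • r) : Cfg (n + 2) d) i a =
        if i = k then -lam * ∑ a, r a * x.1 k a else 0 := by
    split_ifs with h
    · subst h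
      simp only [Pi.single_eq_same, Pi.smul_apply, smul_eq_mul, Finset.mul_sum]
      exact Finset.sum_congr rfl fun a _ => by ring
    · simp [Pi.single_eq_of_ne h]
  simp only [conservativeField, Pi.sub_apply, Pi.add_apply, mul_sub, mul_add,
    Finset.sum_sub_distrib, Finset.sum_add_distrib, hreservoir, sum_mul_fderiv_Vtot_single]
  split_ifs <;> ring

theorem fderiv_Hloc_conservativeField (lam : ℝ) (hU1 : Differentiable ℝ U1)
    (hU2 : Differentiable ℝ U2) {k : ℕ} (hk : k < n + 2) (x : Phs (n + 2) d) :
    fderiv ℝ (Hloc U1 U2 k) x (conservativeField lam U1 U2 x) =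
      heatFlow lam U2 k x - heatFlow lam U2 (k + 1) x := by
  obtain ⟨i, rfl⟩ : ∃ i : Fin (n + 2), ↑i = k := ⟨⟨k, hk⟩, rfl⟩
  have hpower := sum_momentum_mul_conservativeField (U1 := U1) (U2 := U2) lam x i
  have hq : (conservativeField lam U1 U2 x).2.1 = x.1 := rfl
  have hkinetic :
      (∑ a, cfgNat x.1 i a • (ContinuousLinearMap.proj a ∘L oscillator i ∘L .fst ℝ _ _ :
        Phs (n + 2) d →L[ℝ] ℝ)) (conservativeField lam U1 U2 x) =
      ∑ a, x.1 i a * (conservativeField lam U1 U2 x).1 i a := by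
    simp [oscillator_apply, cfgNat_val]
  rw [(hasFDerivAt_Hloc hU1 hU2 hk x).fderiv, add_apply, hkinetic, hpower,
    fderiv_Vtot_single hU1 hU2, heatFlow_eq_add_bondTension, heatFlow_eq_add_bondTension]
  simp only [ContinuousLinearMap.comp_apply, ContinuousLinearMap.coe_fst',
    ContinuousLinearMap.coe_snd', add_apply, sub_apply, smul_apply, hq, oscillator_apply,
    cfgNat_val, map_add, map_sub, smul_eq_mul, add_tsub_cancel_right, Fin.ext_iff, Fin.val_zero,
    Fin.val_last, hk.ne, Nat.add_eq_zero_iff, one_ne_zero, and_false, if_false,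
    Nat.add_right_cancel_iff]
  ring

theorem sum_Ico_fderiv_Hloc_conservativeField (lam : ℝ) (hU1 : Differentiable ℝ U1)
    (hU2 : Differentiable ℝ U2) {a b : ℕ} (hab : a ≤ b) (hb : b ≤ n + 2) (x : Phs (n + 2) d) :
    ∑ k ∈ Finset.Ico a b, fderiv ℝ (Hloc U1 U2 k) x (conservativeField lam U1 U2 x) =
      heatFlow lam U2 a x - heatFlow lam U2 b x := by
  rw [Finset.sum_congr rfl fun k hk => fderiv_Hloc_conservativeField lam hU1 hU2
    ((Finset.mem_Ico.1 hk).2.trans_le hb) x, ← neg_sub_neg,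
    ← Finset.sum_Ico_sub (fun k => -heatFlow lam U2 k x) hab]
  simp only [neg_sub_neg]

end LocalEnergies

section GibbsExponent

variable {U1 U2 : Vc d → ℝ} (T1 Tn : ℝ) {j : ℕ}

theorem hasFDerivAt_Rj (hU1 : Differentiable ℝ U1) (hU2 : Differentiable ℝ U2)
    (hj : j ≤ n + 2) (x : Phs (n + 2) d) :
    HasFDerivAt (Rj T1 Tn U1 U2 j)
      ((1 / T1) • (∑ a, x.2.2.1 a • leftCoord a +
          ∑ k ∈ Finset.range j, fderiv ℝ (Hloc U1 U2 k) x) +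
        (1 / Tn) • (∑ k ∈ Finset.Ico j (n + 2), fderiv ℝ (Hloc U1 U2 k) x +
          ∑ a, x.2.2.2 a • rightCoord a)) x := by
  have hH {k : ℕ} (hk : k < n + 2) : HasFDerivAt (Hloc U1 U2 k) (fderiv ℝ (Hloc U1 U2 k) x) x :=
    (hasFDerivAt_Hloc hU1 hU2 hk x).differentiableAt.hasFDerivAt
  have hleft := HasFDerivAt.fun_sum fun k (hk : k ∈ Finset.range j) =>
    hH ((Finset.mem_range.1 hk).trans_le hj)
  have hright := HasFDerivAt.fun_sum fun k (hk : k ∈ Finset.Ico j (n + 2)) =>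
    hH (Finset.mem_Ico.1 hk).2
  exact (((hasFDerivAt_sum_sq_div_two leftCoord x).fun_add hleft).const_mul (1 / T1)).fun_add
    ((hright.fun_add (hasFDerivAt_sum_sq_div_two rightCoord x)).const_mul (1 / Tn))

theorem fderiv_Rj_apply (hU1 : Differentiable ℝ U1) (hU2 : Differentiable ℝ U2)
    (hj : j ≤ n + 2) (x v : Phs (n + 2) d) :
    fderiv ℝ (Rj T1 Tn U1 U2 j) x v =
      1 / T1 * (∑ a, x.2.2.1 a * v.2.2.1 a +
        ∑ k ∈ Finset.Ico 0 j, fderiv ℝ (Hloc U1 U2 k) x v) +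
      1 / Tn * (∑ k ∈ Finset.Ico j (n + 2), fderiv ℝ (Hloc U1 U2 k) x v +
        ∑ a, x.2.2.2 a * v.2.2.2 a) := by
  rw [(hasFDerivAt_Rj T1 Tn hU1 hU2 hj x).fderiv]
  simp only [leftCoord, rightCoord, add_apply, sum_apply, smul_apply, smul_eq_mul,
    ContinuousLinearMap.comp_apply, ContinuousLinearMap.proj_apply, ContinuousLinearMap.coe_fst',
    ContinuousLinearMap.coe_snd', Finset.range_eq_Ico]

theorem fderiv_Rj_apply_of_fst_eq_zero (hU1 : Differentiable ℝ U1) (hU2 : Differentiable ℝ U2)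
    (hj : j ≤ n + 2) (x : Phs (n + 2) d) (w₁ wn : Vc d) :
    fderiv ℝ (Rj T1 Tn U1 U2 j) x (0, 0, w₁, wn) =
      1 / T1 * ∑ a, x.2.2.1 a * w₁ a + 1 / Tn * ∑ a, x.2.2.2 a * wn a := by
  have hH {k : ℕ} (hk : k < n + 2) : fderiv ℝ (Hloc U1 U2 k) x (0, 0, w₁, wn) = 0 := by
    simp [(hasFDerivAt_Hloc hU1 hU2 hk x).fderiv]
  rw [fderiv_Rj_apply T1 Tn hU1 hU2 hj,
    Finset.sum_eq_zero fun k hk => hH ((Finset.mem_Ico.1 hk).2.trans_le hj),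
    Finset.sum_eq_zero fun k hk => hH (Finset.mem_Ico.1 hk).2, add_zero, zero_add]

theorem fderiv_Rj_eR1 (hU1 : Differentiable ℝ U1) (hU2 : Differentiable ℝ U2)
    (hj : j ≤ n + 2) (x : Phs (n + 2) d) (a : Fin d) :
    fderiv ℝ (Rj T1 Tn U1 U2 j) x (eR1 a) = x.2.2.1 a / T1 := by
  rw [eR1, fderiv_Rj_apply_of_fst_eq_zero T1 Tn hU1 hU2 hj]
  simp [Pi.single_apply, div_eq_inv_mul]

theorem fderiv_Rj_eRn (hU1 : Differentiable ℝ U1) (hU2 : Differentiable ℝ U2)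
    (hj : j ≤ n + 2) (x : Phs (n + 2) d) (a : Fin d) :
    fderiv ℝ (Rj T1 Tn U1 U2 j) x (eRn a) = x.2.2.2 a / Tn := by
  rw [eRn, fderiv_Rj_apply_of_fst_eq_zero T1 Tn hU1 hU2 hj]
  simp [Pi.single_apply, div_eq_inv_mul]

theorem differentiableTwiceAlong_eR1_Rj (hU1 : Differentiable ℝ U1) (hU2 : Differentiable ℝ U2)
    (hj : j ≤ n + 2) : DifferentiableTwiceAlong eR1 (Rj (n := n) T1 Tn U1 U2 j) := by
  refine ⟨fun x => (hasFDerivAt_Rj T1 Tn hU1 hU2 hj x).differentiableAt, fun a => ?_⟩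
  simp only [fderiv_Rj_eR1 T1 Tn hU1 hU2 hj, div_eq_inv_mul]
  exact (T1⁻¹ • leftCoord a).differentiable

theorem differentiableTwiceAlong_eRn_Rj (hU1 : Differentiable ℝ U1) (hU2 : Differentiable ℝ U2)
    (hj : j ≤ n + 2) : DifferentiableTwiceAlong eRn (Rj (n := n) T1 Tn U1 U2 j) := by
  refine ⟨fun x => (hasFDerivAt_Rj T1 Tn hU1 hU2 hj x).differentiableAt, fun a => ?_⟩
  simp only [fderiv_Rj_eRn T1 Tn hU1 hU2 hj, div_eq_inv_mul]
  exact (Tn⁻¹ • rightCoord a).differentiable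

theorem fderiv_Rj_conservativeField (lam : ℝ) (hU1 : Differentiable ℝ U1)
    (hU2 : Differentiable ℝ U2) (hj : j ≤ n + 2) (x : Phs (n + 2) d) :
    fderiv ℝ (Rj T1 Tn U1 U2 j) x (conservativeField lam U1 U2 x) = sigmaEP lam T1 Tn U2 j x := by
  have hleft : ∑ a, x.2.2.1 a * (conservativeField lam U1 U2 x).2.2.1 a =
      -heatFlow lam U2 0 x := by
    simp [conservativeField, heatFlow, Finset.mul_sum, mul_left_comm]
  have hright : ∑ a, x.2.2.2 a * (conservativeField lam U1 U2 x).2.2.2 a =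
      heatFlow lam U2 (n + 2) x := by
    simp [conservativeField, heatFlow, Finset.mul_sum, mul_left_comm]
  rw [fderiv_Rj_apply T1 Tn hU1 hU2 hj, hleft, hright,
    sum_Ico_fderiv_Hloc_conservativeField lam hU1 hU2 (Nat.zero_le j) hj,
    sum_Ico_fderiv_Hloc_conservativeField lam hU1 hU2 hj le_rfl, sigmaEP]
  ring

variable {T1 Tn}

theorem genT_Jop_exp_neg_Rj_mul_exp_neg (γ lam : ℝ) (hT1 : T1 ≠ 0) (hTn : Tn ≠ 0)
    (hU1 : Differentiable ℝ U1) (hU2 : Differentiable ℝ U2) (hj : j ≤ n + 2)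
    {F : Phs (n + 2) d → ℝ} (hF1 : DifferentiableTwiceAlong eR1 F)
    (hFn : DifferentiableTwiceAlong eRn F) (x : Phs (n + 2) d) :
    genT γ lam T1 Tn U1 U2 (Jop fun y => Real.exp (-Rj T1 Tn U1 U2 j y) * Real.exp (-F y))
        (timeReversal x) =
      Real.exp (-Rj T1 Tn U1 U2 j x) * Real.exp (-F x) *
        (γ * (T1 * ∑ a, PD F x (eR1 a) ^ 2 + Tn * ∑ a, PD F x (eRn a) ^ 2) -
          gen γ lam T1 Tn U1 U2 F x - sigmaEP lam T1 Tn U2 j x) := by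
  have hR1 := differentiableTwiceAlong_eR1_Rj (n := n) T1 Tn hU1 hU2 hj
  rw [genT_Jop_exp_neg_mul γ lam hT1 hTn U1 U2 hR1.1 (fderiv_Rj_eR1 T1 Tn hU1 hU2 hj)
    (fderiv_Rj_eRn T1 Tn hU1 hU2 hj) hF1.exp_neg hFn.exp_neg, gen_exp_neg _ _ _ _ _ _ hF1 hFn,
    fderiv_Rj_conservativeField T1 Tn lam hU1 hU2 hj]
  ring

end GibbsExponent

theorem stmt6_general (γ lam : ℝ) {T1 Tn : ℝ} (hT1 : T1 ≠ 0) (hTn : Tn ≠ 0)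
    {U1 U2 : Vc d → ℝ} (hU1 : Differentiable ℝ U1) (hU2 : Differentiable ℝ U2)
    {j : ℕ} (hj : j ≤ n + 2)
    {ρ : Phs (n + 2) d → ℝ} (hρ : ContDiff ℝ 2 ρ) (hρpos : ∀ x, 0 < ρ x)
    {F : Phs (n + 2) d → ℝ} (hF : ∀ x, F x = -Rj T1 Tn U1 U2 j x - Real.log (Jop ρ x))
    (x : Phs (n + 2) d) :
    sigmaEP lam T1 Tn U2 j x =
      γ * (T1 * ∑ a, PD F x (eR1 a) ^ 2 + Tn * ∑ a, PD F x (eRn a) ^ 2) -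
        gen γ lam T1 Tn U1 U2 F x - Jop (genT γ lam T1 Tn U1 U2 ρ) x / Jop ρ x := by
  have hJpos (y : Phs (n + 2) d) : 0 < Jop ρ y := hρpos _
  have hlog : ContDiff ℝ 2 fun y => Real.log (Jop ρ y) :=
    (hρ.comp timeReversal.contDiff).log fun y => (hJpos y).ne'
  have hF1 : DifferentiableTwiceAlong eR1 F :=
    funext hF ▸ (differentiableTwiceAlong_eR1_Rj T1 Tn hU1 hU2 hj).neg_sub (.of_contDiff hlog)
  have hFn : DifferentiableTwiceAlong eRn F :=
    funext hF ▸ (differentiableTwiceAlong_eRn_Rj T1 Tn hU1 hU2 hj).neg_sub (.of_contDiff hlog)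
  have hJρ : Jop ρ = fun y => Real.exp (-Rj T1 Tn U1 U2 j y) * Real.exp (-F y) := by
    funext y
    rw [← Real.exp_add, hF, neg_sub, sub_neg_eq_add, neg_add_cancel_comm_assoc,
      Real.exp_log (hJpos y)]
  have hρJ : Jop (Jop ρ) = ρ := funext fun y => congrArg ρ (timeReversal_timeReversal y)
  have hconj := genT_Jop_exp_neg_Rj_mul_exp_neg γ lam hT1 hTn hU1 hU2 hj hF1 hFn x
  rw [← hJρ, hρJ, ← congrFun hJρ x] at hconj
  rw [Jop_eq_comp_timeReversal (genT _ _ _ _ _ _ _), Function.comp_apply, hconj,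
    mul_div_cancel_left₀ _ (hJpos x).ne']
  ring

/-- if ρ is a smooth everywhere positive stationary density
(`Lᵀρ = 0`) and `F = −R_j − log(Jρ)` (so that `ρ = J(e^{−R_j}e^{−F})`), then the
entropy production is given pointwise by
`σ_j = γ Σ_{i∈{1,n}} Tᵢ |∇_{rᵢ}F|² − L F`. -/
theorem stmt6 (n d : ℕ) (hd : 1 ≤ d) (γ lam T1 Tn : ℝ)
    (hγ : 0 < γ) (hlam : 0 < lam) (hT1 : 0 < T1) (hTn : 0 < Tn)
    (U1 U2 : Vc d → ℝ) (hU1 : ContDiff ℝ (⊤ : ℕ∞) U1) (hU2 : ContDiff ℝ (⊤ : ℕ∞) U2)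
    (j : ℕ) (hj : j ≤ n + 2)
    (ρ : Phs (n+2) d → ℝ) (hρ : ContDiff ℝ (⊤ : ℕ∞) ρ) (hρpos : ∀ x, 0 < ρ x)
    (hstat : ∀ x, genT γ lam T1 Tn U1 U2 ρ x = 0)
    (F : Phs (n+2) d → ℝ)
    (hF : ∀ x : Phs (n+2) d,
      F x = - Rj T1 Tn U1 U2 j x - Real.log (ρ (-x.1, x.2.1, x.2.2.1, x.2.2.2))) :
    ∀ x : Phs (n+2) d,
      sigmaEP lam T1 Tn U2 j x
        = γ * (T1 * (∑ a, (PD F x (eR1 a)) ^ 2)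
               + Tn * (∑ a, (PD F x (eRn a)) ^ 2))
          - gen γ lam T1 Tn U1 U2 F x := by
  intro x
  simpa [Jop, hstat] using stmt6_general γ lam hT1.ne' hTn.ne' (hU1.differentiable (by simp))
    (hU2.differentiable (by simp)) hj (hρ.of_le (by norm_cast)) hρpos hF x

end
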